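/- For any extended logic program Π and any answer set X of Π, it holds that X = ∪_{i≥0} T^i_{Π,X}(∅), where T_{Π,X} is the extended immediate consequence operator with context X. -/

import Mathlib

open scoped Classical

/-- A literal: an atom `A` or its classical negation `¬A`. -/
inductive Lit (α : Type) : Type
  | pos : α → Lit α
  | neg : α → Lit α

/-- A rule with a head literal and finite positive and negative bodies. -/
structure Rule (α : Type) where
  head : Lit α
  pbody : Finset (Lit α)
  nbody : Finset (Lit α)

/-- A program is a set of rules (finiteness is stated as a hypothesis). -/
abbrev Program (α : Type) := Set (Rule α)

/-- `X` is consistent if it contains no complementary pair. -/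
def Consistent {α : Type} (X : Set (Lit α)) : Prop :=
  ¬ ∃ A : α, Lit.pos A ∈ X ∧ Lit.neg A ∈ X

/-- `X` is logically closed if it is consistent or equals the set of all literals. -/
def LogClosed {α : Type} (X : Set (Lit α)) : Prop :=
  Consistent X ∨ X = Set.univ

/-- `X` is closed under (basic) program `P`. -/
def ClosedUnder {α : Type} (P : Program α) (X : Set (Lit α)) : Prop :=
  ∀ r ∈ P, ↑r.pbody ⊆ X → r.head ∈ X

/-- `Cn P` : the smallest logically closed set closed under basic program `P`. -/
def Cn {α : Type} (P : Program α) : Set (Lit α) :=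
  ⋂₀ {X | LogClosed X ∧ ClosedUnder P X}

/-- The reduct of `P` relative to `X`. -/
def reduct {α : Type} (P : Program α) (X : Set (Lit α)) : Program α :=
  {s | ∃ r ∈ P, (↑r.nbody ∩ X = (∅ : Set (Lit α))) ∧ s = ⟨r.head, r.pbody, ∅⟩}

/-- A program is basic if all its rules have empty negative body. -/
def IsBasic {α : Type} (P : Program α) : Prop := ∀ r ∈ P, r.nbody = ∅

/-- `C_Π(X) = Cn(Π^X)`. -/
noncomputable def Cop {α : Type} (P : Program α) (X : Set (Lit α)) : Set (Lit α) :=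
  Cn (reduct P X)

/-- `A_Π(X) = C_Π(C_Π(X))`. -/
noncomputable def Aop {α : Type} (P : Program α) (X : Set (Lit α)) : Set (Lit α) :=
  Cop P (Cop P X)

/-- `X` is an answer set of `P` iff `Cn(P^X) = X`. -/
def AnswerSet {α : Type} (P : Program α) (X : Set (Lit α)) : Prop :=
  Cn (reduct P X) = X

/-- Immediate consequence operator for a basic program. -/
noncomputable def T {α : Type} (P : Program α) (X : Set (Lit α)) : Set (Lit α) :=
  if Consistent X then {L | ∃ r ∈ P, ↑r.pbody ⊆ X ∧ L = r.head} else Set.univ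

/-- `r` is active wrt `(X, Y)`. -/
def Active {α : Type} (r : Rule α) (X Y : Set (Lit α)) : Prop :=
  ↑r.pbody ⊆ X ∧ ↑r.nbody ∩ Y = (∅ : Set (Lit α))

/-- Extended immediate consequence operator `T_{Π,Y}(X)`. -/
noncomputable def TE {α : Type} (P : Program α) (Y X : Set (Lit α)) : Set (Lit α) :=
  if Consistent X then {L | ∃ r ∈ P, Active r X Y ∧ L = r.head} else Set.univ

/-- Preference-sensitive operator `T_{(Π,<),Y}(X)` (Definition 1). -/
noncomputable def TP {α : Type} (P : Program α) (lt : Rule α → Rule α → Prop)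
    (Y X : Set (Lit α)) : Set (Lit α) :=
  if Consistent X then
    {L | ∃ r ∈ P, Active r X Y ∧
      (¬ ∃ r' ∈ P, lt r r' ∧ Active r' Y X ∧ r'.head ∉ X) ∧ L = r.head}
  else Set.univ

/-- `C_{(Π,<)}(X)` (Definition 2). -/
noncomputable def CP {α : Type} (P : Program α) (lt : Rule α → Rule α → Prop)
    (X : Set (Lit α)) : Set (Lit α) :=
  ⋃ i : ℕ, (TP P lt X)^[i] ∅

/-- `A_{(Π,<)}(X) = C_{(Π,<)}(C_{(Π,<)}(X))`. -/
noncomputable def AP {α : Type} (P : Program α) (lt : Rule α → Rule α → Prop)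
    (X : Set (Lit α)) : Set (Lit α) :=
  CP P lt (CP P lt X)

/-- The set `D^r_{(X,Y)}` of removable literals. -/
def D {α : Type} (P : Program α) (lt : Rule α → Rule α → Prop) (r : Rule α)
    (X Y : Set (Lit α)) : Set (Lit α) :=
  {L | ∀ r' ∈ P, r'.head = L → ↑r'.pbody ⊆ Y →
      lt r' r ∧ ({r.head} ∪ X) ∩ ↑r'.nbody ≠ (∅ : Set (Lit α))}

/-- `T°_{(Π,<),Y}(X)` (Definition 3). -/
noncomputable def TN {α : Type} (P : Program α) (lt : Rule α → Rule α → Prop)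
    (Y X : Set (Lit α)) : Set (Lit α) :=
  if Consistent X then
    {L | ∃ r ∈ P, Active r X (Y \ D P lt r X Y) ∧ L = r.head}
  else Set.univ

/-- `C°_{(Π,<)}(X)` (Definition 4). -/
noncomputable def CN {α : Type} (P : Program α) (lt : Rule α → Rule α → Prop)
    (X : Set (Lit α)) : Set (Lit α) :=
  ⋃ i : ℕ, (TN P lt X)^[i] ∅

/-- `A°_{(Π,<)}(X) = C°_{(Π,<)}(C_Π(X))`. -/
noncomputable def AN {α : Type} (P : Program α) (lt : Rule α → Rule α → Prop)
    (X : Set (Lit α)) : Set (Lit α) :=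
  CN P lt (Cop P X)

theorem TE_mono_aux {α : Type} (P : Program α) (Y : Set (Lit α)) : Monotone (TE P Y) := by
  intro A B hAB
  by_cases hB : Consistent B
  · have hA : Consistent A := fun ⟨a, h1, h2⟩ => hB ⟨a, hAB h1, hAB h2⟩
    simp only [TE, if_pos hA, if_pos hB]
    rintro L ⟨r, hr, ⟨h1, h2⟩, rfl⟩
    exact ⟨r, hr, ⟨h1.trans hAB, h2⟩, rfl⟩
  · simp only [TE, if_neg hB]
    exact Set.subset_univ _

/-- any answer set `X` of `Π` equals `⋃ i, T_{Π,X}^i(∅)`. -/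
theorem answerSet_eq_iUnion_iterate_TE {α : Type} (P : Program α)
    (hfin : P.Finite) (X : Set (Lit α)) (hX : AnswerSet P X) :
    X = ⋃ i : ℕ, (TE P X)^[i] ∅ := by
  have hm : Monotone (fun i : ℕ => (TE P X)^[i] ∅) :=
    (TE_mono_aux P X).monotone_iterate_of_le_map (Set.empty_subset _)
  apply Set.Subset.antisymm
  · intro L hL
    rw [← hX] at hL
    refine hL _ ⟨?_, ?_⟩
    · by_cases hc : Consistent (⋃ i : ℕ, (TE P X)^[i] ∅)
      · exact Or.inl hc
      · right
        obtain ⟨A, h1, h2⟩ := not_not.mp hc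
        obtain ⟨i, h1⟩ := Set.mem_iUnion.mp h1
        obtain ⟨j, h2⟩ := Set.mem_iUnion.mp h2
        have hn : ¬ Consistent ((TE P X)^[max i j] ∅) := fun h =>
          h ⟨A, hm (le_max_left i j) h1, hm (le_max_right i j) h2⟩
        refine Set.eq_univ_of_forall fun M => Set.mem_iUnion.mpr ⟨max i j + 1, ?_⟩
        rw [Function.iterate_succ_apply', TE, if_neg hn]
        trivial
    · rintro s ⟨r, hr, hn, rfl⟩ hb
      obtain ⟨i, hi⟩ := hm.directed_le.exists_mem_subset_of_finset_subset_biUnion hb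
      refine Set.mem_iUnion.mpr ⟨i + 1, ?_⟩
      rw [Function.iterate_succ_apply', TE]
      split_ifs with hc
      · exact ⟨r, hr, ⟨hi, hn⟩, rfl⟩
      · trivial
  · refine Set.iUnion_subset fun i => ?_
    intro L hL
    rw [← hX]
    rintro Z ⟨hl, hcl⟩
    revert L
    change (TE P X)^[i] ∅ ⊆ Z
    induction i with
    | zero => exact Set.empty_subset _
    | succ i ih =>
      rw [Function.iterate_succ_apply']
      refine (TE_mono_aux P X ih).trans ?_
      rcases hl with hc | rfl
      · rw [TE, if_pos hc]
        rintro L ⟨r, hr, ⟨h1, h2⟩, rfl⟩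
        exact hcl ⟨r.head, r.pbody, ∅⟩ ⟨r, hr, h2, rfl⟩ h1
      · exact Set.subset_univ _
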